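/- Let C be a triangulated category with a weight structure w, let B be a set of objects of C_{[0,1]}, and let 𝔻 be the triangulated subcategory of C generated by B. Let A, A' ∈ C_{w=0}. Then any morphism f : A → A' in the Verdier quotient C/𝔻 can be presented as a composition g ∘ s⁻¹ ∘ i, where A'', T ∈ C_{w=0}, g ∈ C(A'', A'), s ∈ C(A'', A ⊕ T) with Cone(s) an object of 𝔻 (so that s becomes invertible in C/𝔻), and i : A → A ⊕ T is the canonical coretraction. -/

import Mathlib

open CategoryTheory Limits Pretriangulated ZeroObject

universe v u v' u'

section TriangulatedPrelude

variable {C : Type u} [Category.{v} C] [HasZeroObject C] [HasShift C ℤ] [Preadditive C]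
  [∀ n : ℤ, (shiftFunctor C n).Additive] [Pretriangulated C]

/-- The objects of the smallest strict full triangulated subcategory of `C`
containing the set of objects `B`. -/
inductive genSub (B : Set C) : C → Prop
  | of (X : C) (hX : X ∈ B) : genSub B X
  | zero (X : C) (hX : IsZero X) : genSub B X
  | shift (X : C) (n : ℤ) (hX : genSub B X) : genSub B (X⟦n⟧)
  | ext₂ (T : Triangle C) (hT : T ∈ distTriang C) (h₁ : genSub B T.obj₁)
      (h₃ : genSub B T.obj₃) : genSub B T.obj₂

/-- The triangulated subcategory of `C` generated by `B`. -/
def genSubcat (B : Set C) : ObjectProperty C :=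
  genSub B

instance genSubcat_isTriangulated (B : Set C) : (genSubcat B).IsTriangulated where
  exists_zero := ⟨0, isZero_zero _, genSub.zero _ (isZero_zero _)⟩
  isStableUnderShiftBy n := ⟨fun X h => genSub.shift X n h⟩
  ext₂' T hT h₁ h₃ := ObjectProperty.le_isoClosure _ _ (genSub.ext₂ T hT h₁ h₃)

/-- The extension-closure of a class of objects `E`: the smallest class containing `E`
and `0` and such that for any distinguished triangle `X ⟶ Y ⟶ Z` with `X, Z` in the
class, `Y` is also in the class. -/
inductive extClosure (E : Set C) : C → Prop
  | of (X : C) (hX : X ∈ E) : extClosure E X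
  | zero (X : C) (hX : IsZero X) : extClosure E X
  | ext₂ (T : Triangle C) (hT : T ∈ distTriang C) (h₁ : extClosure E T.obj₁)
      (h₃ : extClosure E T.obj₃) : extClosure E T.obj₂

/-- `D_{[i,j]}`: the extension-closure of `∪_{i ≤ l ≤ j} D[l]`. -/
def shiftClosure (D : Set C) (i j : ℤ) : Set C :=
  extClosure {X | ∃ (Y : C) (l : ℤ), i ≤ l ∧ l ≤ j ∧ Y ∈ D ∧ X = Y⟦l⟧}

/-- `D_{≥ i} = ∪_{k ≥ i} D_{[i,k]}`. -/
def shiftClosureGE (D : Set C) (i : ℤ) : Set C := {X | ∃ k, i ≤ k ∧ X ∈ shiftClosure D i k}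

/-- `D_{≤ j} = ∪_{k ≤ j} D_{[k,j]}`. -/
def shiftClosureLE (D : Set C) (j : ℤ) : Set C := {X | ∃ k, k ≤ j ∧ X ∈ shiftClosure D k j}

/-- A set of objects `D` is weakly negative if `0 ∈ D` and `Hom(X, Y[i]) = 0`
for all `X, Y ∈ D` and all `i ≥ 2`. -/
def WeaklyNegative (D : Set C) : Prop :=
  (0 : C) ∈ D ∧ ∀ X ∈ D, ∀ Y ∈ D, ∀ i : ℤ, 2 ≤ i → ∀ f : X ⟶ (Y⟦i⟧), f = 0

end TriangulatedPrelude

section WeightStructurePrelude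

variable (C : Type u) [Category.{v} C] [HasZeroObject C] [HasShift C ℤ] [Preadditive C]
  [∀ n : ℤ, (shiftFunctor C n).Additive] [Pretriangulated C]

/-- A weight structure on a (pre)triangulated category `C` (homological convention):
two retract-closed classes of objects `LE = C_{w≤0}` and `GE = C_{w≥0}` such that
`C_{w≤0} ⊆ C_{w≤0}[1]`, `C_{w≥0}[1] ⊆ C_{w≥0}`, `Hom(C_{w≤0}, C_{w≥0}[1]) = 0`, and every
object `M` admits a weight decomposition `X ⟶ M ⟶ Y ⟶ X[1]` with `X ∈ C_{w≤0}`,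
`Y ∈ C_{w≥0}[1]`. -/
structure WeightStructure where
  /-- the class `C_{w≤0}` -/
  LE : Set C
  /-- the class `C_{w≥0}` -/
  GE : Set C
  retract_LE : ∀ ⦃X Y : C⦄, Y ∈ LE → ∀ (i : X ⟶ Y) (r : Y ⟶ X), i ≫ r = 𝟙 X → X ∈ LE
  retract_GE : ∀ ⦃X Y : C⦄, Y ∈ GE → ∀ (i : X ⟶ Y) (r : Y ⟶ X), i ≫ r = 𝟙 X → X ∈ GE
  shift_LE : ∀ X ∈ LE, X⟦(-1 : ℤ)⟧ ∈ LE
  shift_GE : ∀ X ∈ GE, X⟦(1 : ℤ)⟧ ∈ GE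
  orthogonality : ∀ X ∈ LE, ∀ Y ∈ GE, ∀ f : X ⟶ (Y⟦(1 : ℤ)⟧), f = 0
  decomposition : ∀ M : C, ∃ (X Y : C) (a : X ⟶ M) (b : M ⟶ Y) (c : Y ⟶ X⟦(1 : ℤ)⟧),
    (Triangle.mk a b c ∈ distTriang C) ∧ X ∈ LE ∧ Y⟦(-1 : ℤ)⟧ ∈ GE

variable {C}

/-- The class `C_{w=0} = C_{w≤0} ∩ C_{w≥0}` of objects of the heart. -/
def WeightStructure.heart (w : WeightStructure C) : Set C := w.LE ∩ w.GE

/-- The class `C_{[0,1]} = C_{w≥0} ∩ C_{w≤1}`. -/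
def WeightStructure.zeroOne (w : WeightStructure C) : Set C :=
  {X | X ∈ w.GE ∧ X⟦(-1 : ℤ)⟧ ∈ w.LE}

end WeightStructurePrelude

/-!
Write `𝔻` for the subcategory generated by `B`. Every shift of an object of `C_{[0,1]}` lies in
`C_{w≤n}` or in `C_{w≥n}`, and by orthogonality a triangle with first term in `C_{w≥n}` and third
term in `C_{w≤n}` splits; so every object of `𝔻` is an extension of an object of
`𝔻 ∩ C_{w≥n}` by an object of `𝔻 ∩ C_{w≤n}`.

Represent `f` by a roof `A ← M → A'` with `Z = Cone(M → A)` in `𝔻`. As `A ∈ C_{w≤0}`, the map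
`A → Z` lifts to the `w≤1` part of `Z`, so `Z` may be assumed to lie in `C_{w≤1}`. Let `Y` be its
`w≥0` part, and let `T → Y` be the first map of a weight decomposition of `Y`; then `T` is in the
heart, and so is the fibre `A''` of `A ⊕ T → Y`. The fibre of `Z → Y` lies in `C_{w≤0}`, hence has
no maps to `A'[1]`, and neither has `A ⊕ T`. Therefore `M → A'` extends along `M → A''`, up to a
map that factors through `M → A` and is absorbed by the projection `A'' → A ⊕ T → A`.
-/

section Triangulated

open ObjectProperty

variable {C : Type u} [Category.{v} C] [HasZeroObject C] [HasShift C ℤ] [Preadditive C]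
  [∀ n : ℤ, (shiftFunctor C n).Additive] [Pretriangulated C]

instance isTriangulatedClosed₂_inf {P Q : ObjectProperty C} [P.IsTriangulatedClosed₂]
    [P.IsClosedUnderIsomorphisms] [Q.IsTriangulatedClosed₂] [Q.IsClosedUnderIsomorphisms] :
    (P ⊓ Q).IsTriangulatedClosed₂ :=
  .mk' fun _ hT h₁ h₃ =>
    ⟨P.ext_of_isTriangulatedClosed₂ _ hT h₁.1 h₃.1, Q.ext_of_isTriangulatedClosed₂ _ hT h₁.2 h₃.2⟩

instance containsZero_extensionProduct {P Q : ObjectProperty C} [P.ContainsZero]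
    [Q.ContainsZero] : (extensionProduct P Q).ContainsZero where
  exists_zero := by
    obtain ⟨X, hX, hPX⟩ := P.exists_prop_of_containsZero
    exact ⟨X, hX, le_extensionProduct_left _ _ hPX⟩

lemma extensionProduct_le_swap_of_forall_eq_zero {P Q : ObjectProperty C}
    (hPQ : ∀ ⦃X Y : C⦄, P X → Q Y → ∀ f : X ⟶ Y⟦(1 : ℤ)⟧, f = 0) :
    extensionProduct Q P ≤ extensionProduct P Q := by
  rintro Z ⟨Y, X, _, _, h, hT, hY, hX⟩
  obtain ⟨e, -, -⟩ := exists_iso_binaryBiproduct_of_distTriang _ hT (hPQ hX hY h)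
  exact prop_of_iso _ (biprod.braiding X Y ≪≫ e.symm)
    ⟨X, Y, _, _, _, binaryBiproductTriangle_distinguished X Y, hX, hY⟩

lemma isTriangulatedClosed₂_extensionProduct [IsTriangulated C] {P Q : ObjectProperty C}
    [P.IsTriangulatedClosed₂] [P.IsClosedUnderIsomorphisms]
    [Q.IsTriangulatedClosed₂] [Q.IsClosedUnderIsomorphisms]
    (hPQ : extensionProduct Q P ≤ extensionProduct P Q) :
    (extensionProduct P Q).IsTriangulatedClosed₂ := by
  refine .mk' fun T hT h₁ h₃ => ?_
  have mul_self : extensionProduct (extensionProduct P Q) (extensionProduct P Q) ≤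
      extensionProduct P Q :=
    calc
      _ = extensionProduct P (extensionProduct (extensionProduct Q P) Q) := by
        simp only [extensionProduct_assoc]
      _ ≤ extensionProduct P (extensionProduct (extensionProduct P Q) Q) :=
        monotone_extensionProduct_right _ (monotone_extensionProduct_left _ hPQ)
      _ = extensionProduct (extensionProduct P P) (extensionProduct Q Q) := by
        simp only [extensionProduct_assoc]
      _ ≤ extensionProduct P (extensionProduct Q Q) :=
        monotone_extensionProduct_left _
          (extensionProduct_le_of_isTriangulatedClosed₂ le_rfl le_rfl)
      _ ≤ extensionProduct P Q :=
        monotone_extensionProduct_right _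
          (extensionProduct_le_of_isTriangulatedClosed₂ le_rfl le_rfl)
  exact mul_self _ ⟨_, _, _, _, _, hT, h₁, h₃⟩

instance genSubcat_isClosedUnderIsomorphisms (B : Set C) :
    (genSubcat B).IsClosedUnderIsomorphisms where
  of_iso e hX := by
    obtain ⟨_, _, _, hT⟩ := distinguished_cocone_triangle e.hom
    exact .ext₂ _ hT hX (.zero _ (Triangle.isZero₃_of_isIso₁ _ hT (inferInstanceAs (IsIso e.hom))))

lemma genSubcat_le {B : Set C} {P : ObjectProperty C} [P.IsClosedUnderIsomorphisms]
    [P.ContainsZero] [P.IsTriangulatedClosed₂] (hB : ∀ X ∈ B, ∀ n : ℤ, P (X⟦n⟧)) :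
    genSubcat B ≤ P := by
  have shifts_mem {X : C} (hX : genSub B X) (n : ℤ) : P (X⟦n⟧) := by
    induction hX generalizing n with
    | of X hX => exact hB X hX n
    | zero X hX => exact P.prop_of_isZero ((shiftFunctor C n).map_isZero hX)
    | shift X k _ ih => exact P.prop_of_iso ((shiftFunctorAdd C k n).app X) (ih (k + n))
    | ext₂ T hT _ _ ih₁ ih₃ =>
      exact P.ext_of_isTriangulatedClosed₂ _ (T.shift_distinguished hT n) (ih₁ n) (ih₃ n)
  exact fun X hX => P.prop_of_iso ((shiftFunctorZero C ℤ).app X) (shifts_mem hX 0)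

lemma exists_eq_hom₁_comp_add_mor₁_comp {T₁ T₂ : Triangle C} (hT₁ : T₁ ∈ distTriang C)
    (hT₂ : T₂ ∈ distTriang C) (φ : T₁ ⟶ T₂) {W : C}
    (h₃ : ∀ k : T₁.obj₃ ⟶ W⟦(1 : ℤ)⟧, ∃ l, k = φ.hom₃ ≫ l)
    (h₂ : ∀ l : T₂.obj₂ ⟶ W⟦(1 : ℤ)⟧, l = 0) (g : T₁.obj₁ ⟶ W) :
    ∃ (g₁ : T₂.obj₁ ⟶ W) (h : T₁.obj₂ ⟶ W), g = φ.hom₁ ≫ g₁ + T₁.mor₁ ≫ h := by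
  obtain ⟨l, hl⟩ := h₃ (T₁.mor₃ ≫ g⟦(1 : ℤ)⟧')
  obtain ⟨g₁', rfl⟩ := Triangle.yoneda_exact₃ _ hT₂ l (h₂ _)
  obtain ⟨g₁, rfl⟩ := (shiftFunctor C (1 : ℤ)).map_surjective g₁'
  have mor₃_comp : T₁.mor₃ ≫ (g - φ.hom₁ ≫ g₁)⟦(1 : ℤ)⟧' = 0 := by
    rw [Functor.map_sub, Preadditive.comp_sub, hl, Functor.map_comp, φ.comm₃_assoc, sub_self]
  obtain ⟨h', hh'⟩ : ∃ h', (g - φ.hom₁ ≫ g₁)⟦(1 : ℤ)⟧' = (-T₁.mor₁⟦(1 : ℤ)⟧') ≫ h' :=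
    Triangle.yoneda_exact₃ _ (rot_of_distTriang _ hT₁) _ mor₃_comp
  obtain ⟨h, rfl⟩ := (shiftFunctor C (1 : ℤ)).map_surjective h'
  refine ⟨g₁, -h, ?_⟩
  rw [add_comm, ← sub_eq_iff_eq_add]
  apply (shiftFunctor C (1 : ℤ)).map_injective
  simp [hh']

end Triangulated

namespace WeightStructure

open ObjectProperty

variable {C : Type u} [Category.{v} C] [HasZeroObject C] [HasShift C ℤ] [Preadditive C]
  [∀ n : ℤ, (shiftFunctor C n).Additive] [Pretriangulated C] (w : WeightStructure C)

/-- The class `C_{w≤n} = C_{w≤0}[n]`, encoded as the objects `X` with `X[-n] ∈ C_{w≤0}`. -/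
def le (n : ℤ) : ObjectProperty C := ObjectProperty.shift (· ∈ w.LE) (-n)

/-- The class `C_{w≥n} = C_{w≥0}[n]`, encoded as the objects `X` with `X[-n] ∈ C_{w≥0}`. -/
def ge (n : ℤ) : ObjectProperty C := ObjectProperty.shift (· ∈ w.GE) (-n)

instance isStableUnderRetracts_LE : ObjectProperty.IsStableUnderRetracts (· ∈ w.LE) where
  of_retract r hY := w.retract_LE hY r.i r.r r.retract

instance isStableUnderRetracts_GE : ObjectProperty.IsStableUnderRetracts (· ∈ w.GE) where
  of_retract r hY := w.retract_GE hY r.i r.r r.retract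

instance isStableUnderRetracts_le (n : ℤ) : (w.le n).IsStableUnderRetracts where
  of_retract r hY := prop_of_retract (· ∈ w.LE) (r.map (shiftFunctor C (-n))) hY

instance isStableUnderRetracts_ge (n : ℤ) : (w.ge n).IsStableUnderRetracts where
  of_retract r hY := prop_of_retract (· ∈ w.GE) (r.map (shiftFunctor C (-n))) hY

lemma shift_le {k m n : ℤ} (h : k + n = m) : (w.le m).shift k = w.le n :=
  ObjectProperty.shift_shift (· ∈ w.LE) _ _ _ (by lia)

lemma shift_ge {k m n : ℤ} (h : k + n = m) : (w.ge m).shift k = w.ge n :=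
  ObjectProperty.shift_shift (· ∈ w.GE) _ _ _ (by lia)

lemma le_shift_iff {k m n : ℤ} (h : k + n = m) {X : C} : w.le m (X⟦k⟧) ↔ w.le n X := by
  rw [← w.shift_le h, prop_shift_iff]

lemma ge_shift_iff {k m n : ℤ} (h : k + n = m) {X : C} : w.ge m (X⟦k⟧) ↔ w.ge n X := by
  rw [← w.shift_ge h, prop_shift_iff]

lemma le_zero_iff {X : C} : w.le 0 X ↔ X ∈ w.LE :=
  iff_of_eq (congrFun (ObjectProperty.shift_zero (A := ℤ) (· ∈ w.LE)) X)

lemma ge_zero_iff {X : C} : w.ge 0 X ↔ X ∈ w.GE :=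
  iff_of_eq (congrFun (ObjectProperty.shift_zero (A := ℤ) (· ∈ w.GE)) X)

lemma mem_heart_iff {X : C} : X ∈ w.heart ↔ (w.le 0 ⊓ w.ge 0) X :=
  and_congr w.le_zero_iff.symm w.ge_zero_iff.symm

lemma le_monotone : Monotone w.le :=
  monotone_int_of_le_succ fun n _ hX =>
    (w.le_shift_iff (m := 1) (neg_add_cancel_left n 1)).1 (w.shift_LE _ hX)

lemma ge_antitone : Antitone w.ge :=
  antitone_int_of_succ_le fun _ _ hX =>
    (w.ge_shift_iff (m := -1) (by lia)).1 <|
      (w.ge_shift_iff (m := 0) (by lia)).1 <| w.ge_zero_iff.2 (w.shift_GE _ hX)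

lemma eq_zero_of_le_of_ge {n : ℤ} {X Y : C} (hX : w.le n X) (hY : w.ge (n + 1) Y)
    (f : X ⟶ Y) : f = 0 := by
  let e := (shiftFunctorAdd' C (-(n + 1)) 1 (-n) (by lia)).app Y
  apply (shiftFunctor C (-n)).map_injective
  rw [Functor.map_zero, ← cancel_mono e.hom, zero_comp]
  exact w.orthogonality _ hX _ hY _

lemma extensionProduct_le_ge (n : ℤ) (X : C) : extensionProduct (w.le n) (w.ge (n + 1)) X := by
  obtain ⟨Y, Z, a, b, c, hT, hY, hZ⟩ := w.decomposition (X⟦-n⟧)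
  refine prop_of_iso _ ((shiftFunctorCompIsoId C (-n) n (by lia)).app X)
    ⟨_, _, _, _, _, Triangle.shift_distinguished _ hT n, ?_, ?_⟩
  · exact (w.le_shift_iff (add_zero n)).2 (w.le_zero_iff.2 hY)
  · exact (w.ge_shift_iff (n := 1) (by lia)).2 hZ

lemma le_eq_leftOrthogonal (n : ℤ) : w.le n = (w.ge (n + 1)).leftOrthogonal := by
  ext X
  refine ⟨fun hX Y f hY => w.eq_zero_of_le_of_ge hX hY f, fun hX => ?_⟩
  obtain ⟨Y, Z, i, p, _, hT, hY, hZ⟩ := w.extensionProduct_le_ge n X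
  obtain ⟨r, hr⟩ := Triangle.coyoneda_exact₂ _ hT (𝟙 X) (hX _ hZ)
  exact prop_of_retract _ ⟨r, i, hr.symm⟩ hY

lemma ge_eq_rightOrthogonal {m n : ℤ} (h : n + 1 = m) : w.ge m = (w.le n).rightOrthogonal := by
  subst h
  ext X
  refine ⟨fun hX Y f hY => w.eq_zero_of_le_of_ge hY hX f, fun hX => ?_⟩
  obtain ⟨Y, Z, i, p, _, hT, hY, hZ⟩ := w.extensionProduct_le_ge n X
  obtain ⟨r, hr⟩ := Triangle.yoneda_exact₂ _ hT (𝟙 X) (hX _ hY)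
  exact prop_of_retract _ ⟨p, r, hr.symm⟩ hZ

instance isTriangulatedClosed₂_le (n : ℤ) : (w.le n).IsTriangulatedClosed₂ := by
  rw [le_eq_leftOrthogonal]
  infer_instance

instance containsZero_le (n : ℤ) : (w.le n).ContainsZero := by
  rw [le_eq_leftOrthogonal]
  infer_instance

instance isTriangulatedClosed₂_ge (n : ℤ) : (w.ge n).IsTriangulatedClosed₂ := by
  rw [w.ge_eq_rightOrthogonal (sub_add_cancel n 1)]
  infer_instance

instance containsZero_ge (n : ℤ) : (w.ge n).ContainsZero := by
  rw [w.ge_eq_rightOrthogonal (sub_add_cancel n 1)]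
  infer_instance

lemma le_obj₁_of_distTriang {n : ℤ} (T : Triangle C) (hT : T ∈ distTriang C)
    (h₂ : w.le n T.obj₂) (h₃ : w.le (n + 1) T.obj₃) : w.le n T.obj₁ :=
  (w.le n).ext_of_isTriangulatedClosed₂ _ (inv_rot_of_distTriang _ hT)
    ((w.le_shift_iff (by lia)).2 h₃) h₂

lemma le_obj₃_of_distTriang {n : ℤ} (T : Triangle C) (hT : T ∈ distTriang C)
    (h₁ : w.le n T.obj₁) (h₂ : w.le (n + 1) T.obj₂) : w.le (n + 1) T.obj₃ :=
  (w.le (n + 1)).ext_of_isTriangulatedClosed₂ _ (rot_of_distTriang _ hT) h₂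
    ((w.le_shift_iff (add_comm 1 n)).2 h₁)

lemma ge_obj₁_of_distTriang {n : ℤ} (T : Triangle C) (hT : T ∈ distTriang C)
    (h₂ : w.ge n T.obj₂) (h₃ : w.ge (n + 1) T.obj₃) : w.ge n T.obj₁ :=
  (w.ge n).ext_of_isTriangulatedClosed₂ _ (inv_rot_of_distTriang _ hT)
    ((w.ge_shift_iff (by lia)).2 h₃) h₂

lemma ge_le_extensionProduct (n : ℤ) :
    w.ge n ≤ extensionProduct (w.le n ⊓ w.ge n) (w.ge (n + 1)) := by
  intro Y hY
  obtain ⟨T, R, t, _, _, hT, hTle, hR⟩ := w.extensionProduct_le_ge n Y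
  exact ⟨T, R, t, _, _, hT, ⟨hTle, w.ge_obj₁_of_distTriang _ hT hY hR⟩, hR⟩

lemma ge_of_distTriang_of_fac {n : ℤ} {X N Y T R : C} {s : X ⟶ N} {p : N ⟶ Y}
    {δ : Y ⟶ X⟦(1 : ℤ)⟧} (hs : Triangle.mk s p δ ∈ distTriang C) (hN : w.ge n N)
    {t : T ⟶ Y} {b : Y ⟶ R} {c : R ⟶ T⟦(1 : ℤ)⟧} (ht : Triangle.mk t b c ∈ distTriang C)
    (hR : w.ge (n + 1) R) (j : T ⟶ N) (fac : j ≫ p = t) : w.ge n X := by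
  rw [← w.ge_shift_iff (add_comm 1 n), w.ge_eq_rightOrthogonal rfl]
  intro W f hW
  have hN' : w.ge (n + 1) (N⟦(1 : ℤ)⟧) := (w.ge_shift_iff (add_comm 1 n)).2 hN
  obtain ⟨l, rfl⟩ : ∃ l : W ⟶ Y, f = l ≫ δ :=
    Triangle.coyoneda_exact₁ _ hs f (w.eq_zero_of_le_of_ge hW hN' _)
  obtain ⟨k, rfl⟩ : ∃ k : W ⟶ T, l = k ≫ t :=
    Triangle.coyoneda_exact₂ _ ht l (w.eq_zero_of_le_of_ge hW hR _)
  have p_comp_δ : p ≫ δ = 0 := comp_distTriang_mor_zero₂₃ _ hs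
  simp [← fac, p_comp_δ]

lemma exists_distTriang_biprod_desc {n : ℤ} {A Y : C} (hA : (w.le n ⊓ w.ge n) A)
    (hY_le : w.le (n + 1) Y) (hY_ge : w.ge n Y) (y : A ⟶ Y) :
    ∃ (A'' T : C) (t : T ⟶ Y) (s : A'' ⟶ A ⊞ T) (δ : Y ⟶ A''⟦(1 : ℤ)⟧),
      Triangle.mk s (biprod.desc y t) δ ∈ distTriang C ∧
        (w.le n ⊓ w.ge n) A'' ∧ (w.le n ⊓ w.ge n) T := by
  obtain ⟨T, R, t, _, _, ht, hT, hR⟩ := w.ge_le_extensionProduct n Y hY_ge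
  have hAT : (w.le n ⊓ w.ge n) (A ⊞ T) :=
    ext_of_isTriangulatedClosed₂ _ _ (binaryBiproductTriangle_distinguished A T) hA hT
  obtain ⟨A'', s, δ, hs⟩ := distinguished_cocone_triangle₁ (biprod.desc y t)
  exact ⟨A'', T, t, s, δ, hs, ⟨w.le_obj₁_of_distTriang _ hs hAT.1 hY_le,
    w.ge_of_distTriang_of_fac hs hAT.2 ht hR biprod.inr (by simp)⟩, hT⟩

/-- Weak weight decompositions inside `P`: for each `n`, every object of `P` is an extension of
an object of `P` in `C_{w≥n}` by an object of `P` in `C_{w≤n}`. -/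
def HasWeakDecompositions (P : ObjectProperty C) : Prop :=
  ∀ n : ℤ, P ≤ extensionProduct (P ⊓ w.le n) (P ⊓ w.ge n)

lemma le_or_ge_of_mem_zeroOne {X : C} (hX : X ∈ w.zeroOne) (n : ℤ) : w.le n X ∨ w.ge n X := by
  obtain h | h : 1 ≤ n ∨ n ≤ 0 := by lia
  · exact .inl (w.le_monotone h _ hX.2)
  · exact .inr (w.ge_antitone h _ (w.ge_zero_iff.2 hX.1))

lemma hasWeakDecompositions_genSubcat [IsTriangulated C] {B : Set C}
    (hB : ∀ X ∈ B, ∀ n : ℤ, w.le n X ∨ w.ge n X) : w.HasWeakDecompositions (genSubcat B) := by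
  intro n
  have := isTriangulatedClosed₂_extensionProduct <|
    extensionProduct_le_swap_of_forall_eq_zero (P := genSubcat B ⊓ w.le n)
      (Q := genSubcat B ⊓ w.ge n) fun X Y hX hY f =>
        w.eq_zero_of_le_of_ge hX.2 ((w.ge_shift_iff (add_comm 1 n)).2 hY.2) f
  refine genSubcat_le fun X hX k => ?_
  have hXk : genSubcat B (X⟦k⟧) := .shift _ k (.of X hX)
  rcases hB X hX (n - k) with hX_le | hX_ge
  · exact le_extensionProduct_left _ _ ⟨hXk, (w.le_shift_iff (by lia)).2 hX_le⟩
  · exact le_extensionProduct_right _ _ ⟨hXk, (w.ge_shift_iff (by lia)).2 hX_ge⟩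

variable {w}

lemma HasWeakDecompositions.exists_comp_trW_inf_le {P : ObjectProperty C}
    (hP : w.HasWeakDecompositions P) {n : ℤ} {M A : C} (hA : w.le n A) {m : M ⟶ A}
    (hm : P.trW m) : ∃ (M' : C) (v : M' ⟶ M), (P ⊓ w.le (n + 1)).trW (v ≫ m) := by
  obtain ⟨Z, z, d, hT, hZ⟩ := hm
  obtain ⟨X, Y, a, b, c, hXY, hX, hY⟩ := hP (n + 1) Z hZ
  obtain ⟨x, hx⟩ : ∃ x : A ⟶ X, z = x ≫ a :=
    Triangle.coyoneda_exact₂ _ hXY z (w.eq_zero_of_le_of_ge hA hY.2 _)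
  obtain ⟨M', m', d', hT'⟩ := distinguished_cocone_triangle₁ x
  obtain ⟨v, hv, -⟩ : ∃ v : M' ⟶ M, m' ≫ 𝟙 A = v ≫ m ∧ d' ≫ v⟦(1 : ℤ)⟧' = a ≫ d :=
    complete_distinguished_triangle_morphism₁ _ _ hT' hT (𝟙 A) a
      (hx.symm.trans (Category.id_comp z).symm)
  obtain rfl : m' = v ≫ m := by simpa using hv
  exact ⟨M', v, X, x, d', hT', hX⟩

lemma HasWeakDecompositions.exists_rightFraction {D : Type u'} [Category.{v'} D]
    [IsTriangulated C] {P : ObjectProperty C} [P.IsTriangulated] (hP : w.HasWeakDecompositions P)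
    (L : C ⥤ D) [L.IsLocalization P.trW] {n : ℤ} {A A' : C} (hA : w.le n A)
    (f : L.obj A ⟶ L.obj A') :
    ∃ (M : C) (m : M ⟶ A) (g : M ⟶ A'),
      (P ⊓ w.le (n + 1)).trW m ∧ L.map m ≫ f = L.map g := by
  obtain ⟨φ, rfl⟩ := Localization.exists_rightFraction L P.trW f
  obtain ⟨M, v, hv⟩ := hP.exists_comp_trW_inf_le hA φ.hs
  exact ⟨M, v ≫ φ.s, v ≫ φ.f, hv, by simp⟩

lemma HasWeakDecompositions.exists_trW_biprod {P : ObjectProperty C}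
    (hP : w.HasWeakDecompositions P) {n : ℤ} {M A A' : C} (hA : (w.le n ⊓ w.ge n) A)
    (hA' : w.ge n A') {m : M ⟶ A} (hm : (P ⊓ w.le (n + 1)).trW m) (g : M ⟶ A') :
    ∃ (A'' T : C) (s : A'' ⟶ A ⊞ T) (g' : A'' ⟶ A') (u : M ⟶ A''),
      (w.le n ⊓ w.ge n) A'' ∧ (w.le n ⊓ w.ge n) T ∧ P.trW s ∧
        u ≫ s = m ≫ biprod.inl ∧ u ≫ g' = g := by
  obtain ⟨Z, z, d, hmz, hZ⟩ := hm
  obtain ⟨X, Y, a, q, c, hXY, hX, hY⟩ := hP n Z hZ.1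
  have hY_le : w.le (n + 1) Y := w.le_obj₃_of_distTriang _ hXY hX.2 hZ.2
  obtain ⟨A'', T, t, s, δ, hs, hA'', hT⟩ := w.exists_distTriang_biprod_desc hA hY_le hY.2 (z ≫ q)
  have comm : z ≫ q = biprod.inl ≫ biprod.desc (z ≫ q) t := (biprod.inl_desc _ _).symm
  obtain ⟨u, hu, hδ⟩ : ∃ u : M ⟶ A'', m ≫ biprod.inl = u ≫ s ∧ d ≫ u⟦(1 : ℤ)⟧' = q ≫ δ :=
    complete_distinguished_triangle_morphism₁ _ _ hmz hs biprod.inl q comm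
  have hA'_shift : w.ge (n + 1) (A'⟦(1 : ℤ)⟧) := (w.ge_shift_iff (add_comm 1 n)).2 hA'
  have hAT : w.le n (A ⊞ T) := (w.le n).ext_of_isTriangulatedClosed₂ _
    (binaryBiproductTriangle_distinguished A T) hA.1 hT.1
  obtain ⟨g₁, h, rfl⟩ : ∃ (g₁ : A'' ⟶ A') (h : A ⟶ A'), g = u ≫ g₁ + m ≫ h :=
    exists_eq_hom₁_comp_add_mor₁_comp hmz hs (Triangle.homMk _ _ u biprod.inl q hu comm hδ)
      (fun k => Triangle.yoneda_exact₂ _ hXY k (w.eq_zero_of_le_of_ge hX.2 hA'_shift _))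
      (w.eq_zero_of_le_of_ge hAT hA'_shift) g
  refine ⟨A'', T, s, g₁ + s ≫ biprod.fst ≫ h, u, hA'', hT, ⟨Y, _, δ, hs, hY.1⟩, hu.symm, ?_⟩
  rw [Preadditive.comp_add, ← reassoc_of% hu, biprod.inl_fst_assoc]

end WeightStructure

theorem statement16_general {C : Type u} [Category.{v} C] [HasZeroObject C] [HasShift C ℤ]
    [Preadditive C] [∀ n : ℤ, (shiftFunctor C n).Additive] [Pretriangulated C]
    [IsTriangulated C] {D : Type u'} [Category.{v'} D] (w : WeightStructure C)
    (P : ObjectProperty C) [P.IsTriangulated] (hP : w.HasWeakDecompositions P)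
    (L : C ⥤ D) [L.IsLocalization P.trW] {A A' : C} (hA : A ∈ w.heart) (hA' : A' ∈ w.GE)
    (f : L.obj A ⟶ L.obj A') :
    ∃ (A'' T : C), A'' ∈ w.heart ∧ T ∈ w.heart ∧ ∃ (g : A'' ⟶ A') (s : A'' ⟶ A ⊞ T),
      P.trW s ∧ IsIso (L.map s) ∧ ∃ e : L.obj (A ⊞ T) ⟶ L.obj A',
        L.map s ≫ e = L.map g ∧ f = L.map (biprod.inl : A ⟶ A ⊞ T) ≫ e := by
  simp only [w.mem_heart_iff] at hA ⊢
  obtain ⟨M, m, g₀, hm, hf⟩ := hP.exists_rightFraction L hA.1 f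
  obtain ⟨A'', T, s, g, u, hA'', hT, hs, hus, hug⟩ :=
    hP.exists_trW_biprod hA (w.ge_zero_iff.2 hA') hm g₀
  have isIso_m : IsIso (L.map m) :=
    Localization.inverts L P.trW m (ObjectProperty.trW_monotone inf_le_left m hm)
  have isIso_s : IsIso (L.map s) := Localization.inverts L P.trW s hs
  refine ⟨A'', T, hA'', hT, g, s, hs, isIso_s, inv (L.map s) ≫ L.map g, by simp, ?_⟩
  rw [← cancel_epi (L.map m)]
  calc
    L.map m ≫ f = L.map u ≫ L.map g := by rw [hf, ← hug, L.map_comp]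
    _ = L.map (u ≫ s) ≫ inv (L.map s) ≫ L.map g := by simp
    _ = L.map m ≫ L.map biprod.inl ≫ inv (L.map s) ≫ L.map g := by rw [hus, L.map_comp_assoc]

/-- Proposition: in the Verdier quotient of `C` by the subcategory generated by a set
`B ⊆ C_{[0,1]}`, every morphism between images of objects of the heart can be presented
as `g ∘ s⁻¹ ∘ i` with `i` the canonical coretraction `A ⟶ A ⊕ T`. -/
theorem statement16 {C : Type u} [Category.{v} C] [HasZeroObject C] [HasShift C ℤ]
    [Preadditive C] [∀ n : ℤ, (shiftFunctor C n).Additive] [Pretriangulated C]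
    [IsTriangulated C] [HasBinaryBiproducts C]
    (w : WeightStructure C) (B : Set C) (hB : B ⊆ w.zeroOne)
    (A A' : C) (hA : A ∈ w.heart) (hA' : A' ∈ w.heart)
    (f : (genSubcat B).trW.Q.obj A ⟶ (genSubcat B).trW.Q.obj A') :
    ∃ (A'' T : C), A'' ∈ w.heart ∧ T ∈ w.heart ∧
      ∃ (g : A'' ⟶ A') (s : A'' ⟶ A ⊞ T),
        (∃ (Z : C) (a : (A ⊞ T : C) ⟶ Z) (b : Z ⟶ A''⟦(1 : ℤ)⟧),
          (Triangle.mk s a b ∈ distTriang C) ∧ genSub B Z) ∧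
        IsIso ((genSubcat B).trW.Q.map s) ∧
        ∃ e : (genSubcat B).trW.Q.obj (A ⊞ T) ⟶ (genSubcat B).trW.Q.obj A',
          (genSubcat B).trW.Q.map s ≫ e = (genSubcat B).trW.Q.map g ∧
          f = (genSubcat B).trW.Q.map (biprod.inl : A ⟶ A ⊞ T) ≫ e := by
  obtain ⟨A'', T, hA'', hT, g, s, ⟨Z, a, b, hs, hZ⟩, hf⟩ :=
    statement16_general w (genSubcat B)
      (w.hasWeakDecompositions_genSubcat fun _ hX => w.le_or_ge_of_mem_zeroOne (hB hX)) _ hA hA'.2 f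
  exact ⟨A'', T, hA'', hT, g, s, ⟨Z, a, b, hs, hZ⟩, hf⟩
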